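/- Let Z ⊆ Σ^ℤ be a sofic shift and A : Z → ℝ^{n×n} a bounded matrix map whose state-transition matrices satisfy ‖S(k, z)‖ ≤ M γ₁^k for all k ∈ ℕ and z ∈ Z, for some M > 0 and γ₁ ∈ [0,1) (uniform exponential stability with rate γ₁). Then for every γ̃ ∈ (γ₁, 1), the series Q₊(z) := Σ_{k=0}^∞ γ̃^{−2k} S(k, z)ᵀ S(k, z) converges for every z ∈ Z and defines a map Q₊ : Z → S^n_+ satisfying I_n ⪯ Q₊(z) ⪯ (M² γ̃² / (γ̃² − γ₁²)) I_n for all z ∈ Z, and the identity A(z)ᵀ Q₊(σ(z)) A(z) = γ̃² Q₊(z) − γ̃² I_n for all z ∈ Z; in particular A(z)ᵀ Q₊(σ(z)) A(z) ≺ γ̃² Q₊(z). -/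

import Mathlib

open Set Filter Matrix

section Defs

variable {A : Type*}

/-- The shift map on bi-infinite sequences over the alphabet `A`. -/
def shiftMap (z : ℤ → A) : ℤ → A := fun k => z (k + 1)

/-- `s` is a bi-infinite walk, labeled by `z`, in the labeled graph with edge set `E`. -/
def IsLabeledWalk {S : Type*} (E : Set (S × S × A)) (z : ℤ → A) (s : ℤ → S) : Prop :=
  ∀ k : ℤ, (s k, s (k + 1), z k) ∈ E

/-- `Z(G)`: the set of labels of bi-infinite walks of the graph with edge set `E`. -/
def graphLang {S : Type*} (E : Set (S × S × A)) : Set (ℤ → A) :=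
  {z | ∃ s : ℤ → S, IsLabeledWalk E z s}

/-- `Z(G, s₀)`: the set of labels of bi-infinite walks starting (at time `0`) at node `s₀`. -/
def graphLangAt {S : Type*} (E : Set (S × S × A)) (s0 : S) : Set (ℤ → A) :=
  {z | ∃ s : ℤ → S, IsLabeledWalk E z s ∧ s 0 = s0}

/-- A set `Z` of bi-infinite sequences is a sofic shift if it is the set of labels of
bi-infinite walks of some finite labeled graph. -/
def IsSofic (Z : Set (ℤ → A)) : Prop :=
  ∃ (S : Type) (_ : Fintype S) (E : Set (S × S × A)), Z = graphLang E

/-- The graph with node set `Fin K` and edge set `E` is a presentation of the indexed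
covering `C` of `Z`: `Z = Z(G)` and `C j = Z(G, j)` for every node `j`. -/
def IsPresentation {K : ℕ} (E : Set (Fin K × Fin K × A)) (C : Fin K → Set (ℤ → A))
    (Z : Set (ℤ → A)) : Prop :=
  Z = graphLang E ∧ ∀ j : Fin K, C j = graphLangAt E j

/-- `C` is a graph-induced covering of `Z`. -/
def IsGCovering {K : ℕ} (C : Fin K → Set (ℤ → A)) (Z : Set (ℤ → A)) : Prop :=
  ∃ E : Set (Fin K × Fin K × A), IsPresentation E C Z

/-- The forward one-sided sequence `z⁺ = (z 0, z 1, …)`. -/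
def postSeq (z : ℤ → A) : ℕ → A := fun m => z m

/-- The backward one-sided sequence `z⁻ = (…, z (-2), z (-1))`, encoded so that index
`m` holds `z (-(m+1))` (index `0` is `z (-1)`). -/
def preSeq (z : ℤ → A) : ℕ → A := fun m => z (-(m + 1))

/-- Concatenation of a letter with a set of one-sided sequences: for forward sequences this
is `i · B`; for backward sequences (with the encoding of `preSeq`) this is `B · i`. -/
def consSeq (i : A) (B : Set (ℕ → A)) : Set (ℕ → A) :=
  {w | w 0 = i ∧ (fun m => w (m + 1)) ∈ B}

/-- Time inversion of a bi-infinite sequence: `z⁻¹ k = z (-1-k)`. -/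
def timeInv (z : ℤ → A) : ℤ → A := fun k => z (-1 - k)

/-- The transpose graph: edges are reversed, labels kept. -/
def transposeE {S : Type*} (E : Set (S × S × A)) : Set (S × S × A) :=
  {p | (p.2.1, p.1, p.2.2) ∈ E}

/-- Class `K∞` functions. -/
def IsKInf (α : ℝ → ℝ) : Prop :=
  ContinuousOn α (Set.Ici 0) ∧ StrictMonoOn α (Set.Ici 0) ∧ α 0 = 0 ∧
    Tendsto α atTop atTop

/-- Class `KL` functions. -/
def IsKL (β : ℝ → ℝ → ℝ) : Prop :=
  ContinuousOn (fun p : ℝ × ℝ => β p.1 p.2) (Set.Ici 0 ×ˢ Set.Ici 0) ∧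
  (∀ s, 0 ≤ s → ContinuousOn (fun r => β r s) (Set.Ici 0) ∧
      StrictMonoOn (fun r => β r s) (Set.Ici 0) ∧ β 0 s = 0) ∧
  (∀ r, 0 ≤ r → AntitoneOn (fun s => β r s) (Set.Ici 0) ∧
      Tendsto (fun s => β r s) atTop (nhds 0))

/-- The solution map `Φ(k, x₀, z)` of the system `x(k+1) = f(x(k), σ^k z)`. -/
def sol {n : ℕ} (f : (Fin n → ℝ) → (ℤ → A) → Fin n → ℝ) (x0 : Fin n → ℝ) (z : ℤ → A) :
    ℕ → Fin n → ℝ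
  | 0 => x0
  | k + 1 => f (sol f x0 z k) (shiftMap^[k] z)

end Defs

/-- The operator norm of a matrix, induced by the Euclidean norm. -/
noncomputable def opNormE {n : ℕ} (S : Matrix (Fin n) (Fin n) ℝ) : ℝ :=
  ‖LinearMap.toContinuousLinearMap (Matrix.toEuclideanLin S)‖

/-- The state-transition matrix `S(k, z) = A(σ^{k-1} z) ⋯ A(σ z) A(z)`, `S(0, z) = I`. -/
def transMat {n : ℕ} {A : Type*} (Amap : (ℤ → A) → Matrix (Fin n) (Fin n) ℝ)
    (z : ℤ → A) : ℕ → Matrix (Fin n) (Fin n) ℝ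
  | 0 => 1
  | k + 1 => Amap (shiftMap^[k] z) * transMat Amap z k

/-!
Consecutive terms of `Q₊` are linked by `S(k + 1, z) = S(k, σ z) A(z)`: conjugating the series for
`Q₊(σ z)` by `A(z)` shifts the series for `Q₊(z)` by one index, so it yields `γ̃² Q₊(z)` without
its `k = 0` term `γ̃² I`. All terms are positive semidefinite, so the `k = 0` term bounds the sum
from below, while `Sᵀ S ⪯ ‖S‖² I` bounds it from above by the geometric series of ratio
`(γ₁ / γ̃)²`.
-/

section Loewner

open scoped Matrix.Norms.L2Operator MatrixOrder ComplexOrder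

variable {𝕜 m n : Type*} [RCLike 𝕜]

lemma isClosed_setOf_posSemidef : IsClosed {B : Matrix n n 𝕜 | B.PosSemidef} := by
  simp only [PosSemidef, Finsupp.sum, Set.ofPred_and, Set.ofPred_forall]
  refine (isClosed_eq (by fun_prop) continuous_id).inter (isClosed_iInter fun x => ?_)
  exact isClosed_le continuous_const (by fun_prop)

instance orderClosedTopology_matrix : OrderClosedTopology (Matrix n n 𝕜) where
  isClosed_le' := isClosed_setOf_posSemidef.preimage (continuous_snd.sub continuous_fst)

variable [Fintype m] [Fintype n] [DecidableEq n]

lemma le_norm_smul_one_of_isHermitian {B : Matrix n n 𝕜} (hB : B.IsHermitian) :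
    B ≤ ‖B‖ • (1 : Matrix n n 𝕜) := by
  cases isEmpty_or_nonempty n
  · exact (Subsingleton.elim _ _).le
  · rw [← Algebra.algebraMap_eq_smul_one]
    refine le_algebraMap_of_spectrum_le (fun r hr => ?_) hB
    calc r ≤ ‖(r : 𝕜)‖ := by simpa using le_abs_self r
      _ ≤ ‖B‖ := spectrum.norm_le_norm_of_mem (spectrum.algebraMap_mem 𝕜 hr)

lemma conjTranspose_mul_self_le_sq_smul_one {B : Matrix m n 𝕜} {c : ℝ} (hB : ‖B‖ ≤ c) :
    Bᴴ * B ≤ c ^ 2 • (1 : Matrix n n 𝕜) :=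
  calc Bᴴ * B ≤ ‖Bᴴ * B‖ • 1 :=
        le_norm_smul_one_of_isHermitian (isHermitian_conjTranspose_mul_self B)
    _ = ‖B‖ ^ 2 • 1 := by rw [l2_opNorm_conjTranspose_mul_self, sq]
    _ ≤ c ^ 2 • 1 := smul_le_smul_of_nonneg_right (by gcongr) zero_le_one

end Loewner

section DiscountedGramian

variable {𝕜 m n : Type*} [RCLike 𝕜] [Fintype m]

/-- The discounted observability Gramian `∑ₖ γ⁻²ᵏ Sₖᴴ Sₖ` of a sequence of matrices; it is `Q₊(z)`
for `Sₖ = S(k, z)`. As a `tsum`, it is the zero matrix when the series diverges. -/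
noncomputable def discountedGramian (γ : ℝ) (S : ℕ → Matrix m n 𝕜) : Matrix n n 𝕜 :=
  ∑' k, (γ ^ (2 * k))⁻¹ • ((S k)ᴴ * S k)

variable {γ ρ M : ℝ} {S : ℕ → Matrix m n 𝕜}

lemma inv_pow_two_mul_nonneg (γ : ℝ) (k : ℕ) : 0 ≤ (γ ^ (2 * k))⁻¹ :=
  inv_nonneg.2 ((even_two_mul k).pow_nonneg γ)

lemma hasSum_inv_pow_mul_sq_geometric (M : ℝ) (hργ : |ρ| < |γ|) :
    HasSum (fun k : ℕ => (γ ^ (2 * k))⁻¹ * (M * ρ ^ k) ^ 2)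
      (M ^ 2 * γ ^ 2 / (γ ^ 2 - ρ ^ 2)) := by
  have hγ : γ ^ 2 ≠ 0 := by simpa using (abs_nonneg ρ).trans_lt hργ
  have hratio : ρ ^ 2 / γ ^ 2 < 1 := (div_lt_one (by positivity)).2 (sq_lt_sq.2 hργ)
  convert! (hasSum_geometric_of_lt_one (by positivity) hratio).mul_left (M ^ 2) using 1
  · funext k
    rw [div_pow, pow_mul]
    ring
  · rw [one_sub_div hγ, inv_div, mul_div_assoc]

lemma discountedGramian_succ (hγ : γ ≠ 0)
    (hsum : Summable fun k => (γ ^ (2 * k))⁻¹ • ((S k)ᴴ * S k)) :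
    discountedGramian γ (fun k => S (k + 1)) =
      γ ^ 2 • discountedGramian γ S - γ ^ 2 • ((S 0)ᴴ * S 0) := by
  have hterm (k : ℕ) : (γ ^ (2 * k))⁻¹ • ((S (k + 1))ᴴ * S (k + 1)) =
      γ ^ 2 • (γ ^ (2 * (k + 1)))⁻¹ • ((S (k + 1))ᴴ * S (k + 1)) := by
    rw [smul_smul]
    congr 1
    field_simp
    ring
  have hsplit := hsum.tsum_eq_zero_add
  simp only [discountedGramian, hterm, tsum_const_smul'']
  rw [hsplit]
  simp

open scoped MatrixOrder ComplexOrder in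
lemma conjTranspose_mul_self_zero_le_discountedGramian [Finite n]
    (hsum : Summable fun k => (γ ^ (2 * k))⁻¹ • ((S k)ᴴ * S k)) :
    (S 0)ᴴ * S 0 ≤ discountedGramian γ S := by
  have hnonneg (k : ℕ) : 0 ≤ (γ ^ (2 * k))⁻¹ • ((S k)ᴴ * S k) :=
    ((posSemidef_conjTranspose_mul_self (S k)).smul (inv_pow_two_mul_nonneg γ k)).nonneg
  simpa [discountedGramian] using le_hasSum hsum.hasSum 0 fun k _ => hnonneg k

variable [Fintype n]

lemma conjTranspose_mul_discountedGramian_mul {l : Type*}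
    (hsum : Summable fun k => (γ ^ (2 * k))⁻¹ • ((S k)ᴴ * S k)) (B : Matrix n l 𝕜) :
    Bᴴ * discountedGramian γ S * B = discountedGramian γ fun k => S k * B := by
  let conj : Matrix n n 𝕜 →+ Matrix l l 𝕜 := (addMonoidHomMulRight B).comp (addMonoidHomMulLeft Bᴴ)
  have hconj : Continuous conj := by
    change Continuous fun X : Matrix n n 𝕜 => Bᴴ * X * B
    fun_prop
  refine (hsum.map_tsum conj hconj).trans (tsum_congr fun k => ?_)
  simp [conj, Matrix.mul_assoc]

section Bounds

open scoped Matrix.Norms.L2Operator MatrixOrder ComplexOrder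

variable [DecidableEq n]

lemma summable_discountedGramian (hργ : |ρ| < |γ|) (hS : ∀ k, ‖S k‖ ≤ M * ρ ^ k) :
    Summable fun k => (γ ^ (2 * k))⁻¹ • ((S k)ᴴ * S k) := by
  refine .of_norm_bounded (hasSum_inv_pow_mul_sq_geometric M hργ).summable fun k => ?_
  have hweight := inv_pow_two_mul_nonneg γ k
  calc ‖(γ ^ (2 * k))⁻¹ • ((S k)ᴴ * S k)‖
      = (γ ^ (2 * k))⁻¹ * ‖S k‖ ^ 2 := by
        rw [RCLike.real_smul_eq_coe_smul (K := 𝕜), norm_smul, RCLike.norm_ofReal,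
          abs_of_nonneg hweight, l2_opNorm_conjTranspose_mul_self, ← sq]
    _ ≤ (γ ^ (2 * k))⁻¹ * (M * ρ ^ k) ^ 2 := by
        gcongr
        exact hS k

lemma discountedGramian_le (hργ : |ρ| < |γ|) (hS : ∀ k, ‖S k‖ ≤ M * ρ ^ k) :
    discountedGramian γ S ≤ (M ^ 2 * γ ^ 2 / (γ ^ 2 - ρ ^ 2)) • (1 : Matrix n n 𝕜) := by
  refine hasSum_le (fun k => ?_) (summable_discountedGramian hργ hS).hasSum
    ((hasSum_inv_pow_mul_sq_geometric M hργ).smul_const (1 : Matrix n n 𝕜))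
  rw [mul_smul]
  exact smul_le_smul_of_nonneg_left (conjTranspose_mul_self_le_sq_smul_one (hS k))
    (inv_pow_two_mul_nonneg γ k)

end Bounds

end DiscountedGramian

section ShiftSystem

variable {A : Type*} {n : ℕ} {Z : Set (ℤ → A)} {Amap : (ℤ → A) → Matrix (Fin n) (Fin n) ℝ}
  {z : ℤ → A}

lemma IsSofic.mapsTo_shiftMap (hZ : IsSofic Z) : MapsTo shiftMap Z Z := by
  obtain ⟨S, _, E, rfl⟩ := hZ
  rintro z ⟨s, hs⟩
  exact ⟨shiftMap s, fun k => hs (k + 1)⟩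

open scoped Matrix.Norms.L2Operator in
lemma opNormE_eq_l2_opNorm (B : Matrix (Fin n) (Fin n) ℝ) : opNormE B = ‖B‖ := rfl

lemma transMat_succ_eq_mul_right (Amap : (ℤ → A) → Matrix (Fin n) (Fin n) ℝ) (z : ℤ → A)
    (k : ℕ) : transMat Amap z (k + 1) = transMat Amap (shiftMap z) k * Amap z := by
  induction k with
  | zero => simp [transMat]
  | succ k ih => rw [transMat, ih, transMat, ← Matrix.mul_assoc, Function.iterate_succ_apply]

lemma conjTranspose_transMat_zero_mul_self (Amap : (ℤ → A) → Matrix (Fin n) (Fin n) ℝ)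
    (z : ℤ → A) : (transMat Amap z 0)ᴴ * transMat Amap z 0 = 1 := by
  simp [transMat]

lemma transpose_mul_discountedGramian_transMat_mul {γ : ℝ} (hγ : γ ≠ 0)
    (hz : Summable fun k => (γ ^ (2 * k))⁻¹ • ((transMat Amap z k)ᴴ * transMat Amap z k))
    (hσz : Summable fun k =>
      (γ ^ (2 * k))⁻¹ • ((transMat Amap (shiftMap z) k)ᴴ * transMat Amap (shiftMap z) k)) :
    (Amap z)ᵀ * discountedGramian γ (transMat Amap (shiftMap z)) * Amap z =
      γ ^ 2 • discountedGramian γ (transMat Amap z) - γ ^ 2 • 1 := by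
  rw [← conjTranspose_eq_transpose_of_trivial, conjTranspose_mul_discountedGramian_mul hσz]
  simp only [← transMat_succ_eq_mul_right]
  rw [discountedGramian_succ hγ hz, conjTranspose_transMat_zero_mul_self]

end ShiftSystem

theorem future_based_quadratic_construction_general
    {A : Type*} {n : ℕ} (Z : Set (ℤ → A)) (hZ : MapsTo shiftMap Z Z)
    (Amap : (ℤ → A) → Matrix (Fin n) (Fin n) ℝ) (M γ₁ γt : ℝ)
    (hγ : |γ₁| < |γt|)
    (hS : ∀ (k : ℕ), ∀ z ∈ Z, opNormE (transMat Amap z k) ≤ M * γ₁ ^ k) :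
    ∃ Q : (ℤ → A) → Matrix (Fin n) (Fin n) ℝ,
      (∀ z ∈ Z, ∀ i j : Fin n,
        HasSum
          (fun k : ℕ => (γt ^ (2 * k))⁻¹ *
            (((transMat Amap z k)ᵀ * transMat Amap z k) i j))
          (Q z i j)) ∧
      (∀ z ∈ Z,
        (Q z - (1 : Matrix (Fin n) (Fin n) ℝ)).PosSemidef ∧
        ((M ^ 2 * γt ^ 2 / (γt ^ 2 - γ₁ ^ 2)) • (1 : Matrix (Fin n) (Fin n) ℝ) -
            Q z).PosSemidef) ∧
      (∀ z ∈ Z,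
        (Amap z)ᵀ * Q (shiftMap z) * Amap z =
          γt ^ 2 • Q z - γt ^ 2 • (1 : Matrix (Fin n) (Fin n) ℝ)) ∧
      (∀ z ∈ Z,
        (γt ^ 2 • Q z - (Amap z)ᵀ * Q (shiftMap z) * Amap z).PosDef) := by
  have hγt : γt ≠ 0 := abs_pos.1 ((abs_nonneg γ₁).trans_lt hγ)
  have hbound (z) (hz : z ∈ Z) (k : ℕ) :=
    (opNormE_eq_l2_opNorm (transMat Amap z k)).symm.trans_le (hS k z hz)
  have hsum (z) (hz : z ∈ Z) := summable_discountedGramian hγ (hbound z hz)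
  have hlyapunov (z) (hz : z ∈ Z) :=
    transpose_mul_discountedGramian_transMat_mul hγt (hsum z hz) (hsum _ (hZ hz))
  refine ⟨fun z => discountedGramian γt (transMat Amap z), fun z hz i j => ?_, fun z hz => ⟨?_, ?_⟩,
    hlyapunov, fun z hz => ?_⟩
  · exact Pi.hasSum.1 (Pi.hasSum.1 (hsum z hz).hasSum i) j
  · rw [← conjTranspose_transMat_zero_mul_self Amap z]
    exact conjTranspose_mul_self_zero_le_discountedGramian (hsum z hz)
  · exact discountedGramian_le hγ (hbound z hz)
  · rw [hlyapunov z hz, sub_sub_cancel]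
    exact PosDef.one.smul (by positivity)

/-- Theorem: under uniform exponential stability `‖S(k,z)‖ ≤ M γ₁^k`, for every
`γ̃ ∈ (γ₁, 1)` the series `Q₊(z) = Σ_k γ̃^{-2k} S(k,z)ᵀ S(k,z)` converges on `Z`, satisfies
`I ⪯ Q₊(z) ⪯ (M²γ̃²/(γ̃²-γ₁²)) I`, and the Lyapunov identity
`A(z)ᵀ Q₊(σ z) A(z) = γ̃² Q₊(z) - γ̃² I`; in particular
`A(z)ᵀ Q₊(σ z) A(z) ≺ γ̃² Q₊(z)`. -/
theorem future_based_quadratic_construction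
    {A : Type*} [Fintype A] {n : ℕ} (Z : Set (ℤ → A)) (hZ : IsSofic Z)
    (Amap : (ℤ → A) → Matrix (Fin n) (Fin n) ℝ)
    (hbdd : ∃ c : ℝ, ∀ z ∈ Z, opNormE (Amap z) ≤ c)
    (M γ₁ : ℝ) (hM : 0 < M) (hγ₁ : γ₁ ∈ Set.Ico (0 : ℝ) 1)
    (hS : ∀ (k : ℕ), ∀ z ∈ Z, opNormE (transMat Amap z k) ≤ M * γ₁ ^ k) :
    ∀ γt ∈ Set.Ioo γ₁ 1,
      ∃ Q : (ℤ → A) → Matrix (Fin n) (Fin n) ℝ,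
        (∀ z ∈ Z, ∀ i j : Fin n,
          HasSum
            (fun k : ℕ => (γt ^ (2 * k))⁻¹ *
              (((transMat Amap z k)ᵀ * transMat Amap z k) i j))
            (Q z i j)) ∧
        (∀ z ∈ Z,
          (Q z - (1 : Matrix (Fin n) (Fin n) ℝ)).PosSemidef ∧
          ((M ^ 2 * γt ^ 2 / (γt ^ 2 - γ₁ ^ 2)) • (1 : Matrix (Fin n) (Fin n) ℝ) -
              Q z).PosSemidef) ∧
        (∀ z ∈ Z,
          (Amap z)ᵀ * Q (shiftMap z) * Amap z =
            γt ^ 2 • Q z - γt ^ 2 • (1 : Matrix (Fin n) (Fin n) ℝ)) ∧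
        (∀ z ∈ Z,
          (γt ^ 2 • Q z - (Amap z)ᵀ * Q (shiftMap z) * Amap z).PosDef) := by
  rintro γt ⟨hγt, -⟩
  exact future_based_quadratic_construction_general Z hZ.mapsTo_shiftMap Amap M γ₁ γt
    (by rwa [abs_of_nonneg hγ₁.1, abs_of_pos (hγ₁.1.trans_lt hγt)]) hS
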